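/- arXiv:1308.2948 — 4 statements merged into one kernel-verified Lean document; each statement's English description precedes it below -/
import Mathlib

section
/- Let b > a > 0. If f is twice differentiable on [0,b], |f''| is integrable on [0,b], and |f''| is convex on [0,b], then |(f(a)+f(b))/2 − (1/(b−a))·∫_a^b f(x) dx| ≤ ((b−a)²/24)·(|f''(a)| + |f''(b)|). -/
/-!
The trapezoid error `(f a + f b) / 2 - ⨍ f` is linear in `f` and, by the Hermite–Hadamard
inequality, nonnegative for convex `f`. Hence `‖f''‖ ≤ g''` implies that the error of `f` has norm
at most the error of `g`: compose `f` with a norming functional `φ` of its error and use that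
`g - φ ∘ f` is convex. When `‖f''‖` is convex, it lies below its chord on `[a, b]`, so `g` can be
taken to be a cubic whose second derivative is that chord.
-/

open MeasureTheory Real Set

theorem map_add_map_reflect_le_of_convexOn {V : Type*} [AddCommGroup V] [Module ℝ V] {s : Set V}
    {h : V → ℝ} (hconv : ConvexOn ℝ s h) {x y z : V} (hx : x ∈ s) (hy : y ∈ s)
    (hz : z ∈ segment ℝ x y) : h z + h (x + y - z) ≤ h x + h y := by
  obtain ⟨u, v, hu, hv, huv, rfl⟩ := hz
  obtain rfl : v = 1 - u := (sub_eq_of_eq_add' huv.symm).symm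
  have hreflect : x + y - (u • x + (1 - u) • y) = (1 - u) • x + u • y := by module
  calc h (u • x + (1 - u) • y) + h (x + y - (u • x + (1 - u) • y))
      ≤ (u • h x + (1 - u) • h y) + ((1 - u) • h x + u • h y) := by
        rw [hreflect]
        exact add_le_add (hconv.2 hx hy hu hv huv) (hconv.2 hx hy hv hu (sub_add_cancel 1 u))
    _ = h x + h y := by module

section TrapezoidError

variable {E : Type*} [NormedAddCommGroup E] [NormedSpace ℝ E] {a b : ℝ}

/-- The error of the one-step trapezoidal rule for the mean value of a vector-valued function over
`[a, b]`. Unlike Mathlib's `trapezoidal_error`, it is divided by the length of the interval. -/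
noncomputable def trapezoidError (f : ℝ → E) (a b : ℝ) : E :=
  (1 / 2 : ℝ) • (f a + f b) - (1 / (b - a)) • ∫ x in a..b, f x

theorem trapezoidError_sub {f g : ℝ → E} (hf : IntervalIntegrable f volume a b)
    (hg : IntervalIntegrable g volume a b) :
    trapezoidError (f - g) a b = trapezoidError f a b - trapezoidError g a b := by
  simp only [trapezoidError, Pi.sub_apply, intervalIntegral.integral_sub hf hg]
  module

theorem trapezoidError_continuousLinearMap_comp [CompleteSpace E] {F : Type*}
    [NormedAddCommGroup F] [NormedSpace ℝ F] [CompleteSpace F] (φ : E →L[ℝ] F) {f : ℝ → E}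
    (hf : IntervalIntegrable f volume a b) :
    trapezoidError (φ ∘ f) a b = φ (trapezoidError f a b) := by
  simp only [trapezoidError, Function.comp_apply, φ.intervalIntegral_comp_comm hf,
    map_sub, map_smul, map_add]

theorem trapezoidError_nonneg_of_convexOn (hab : a < b) {h : ℝ → ℝ}
    (hint : IntervalIntegrable h volume a b) (hconv : ConvexOn ℝ (Icc a b) h) :
    0 ≤ trapezoidError h a b := by
  have hint_reflect : IntervalIntegrable (fun x ↦ h (a + b - x)) volume a b := by
    simpa using (hint.comp_sub_left (a + b)).symm
  have hreflect : ∫ x in a..b, h (a + b - x) = ∫ x in a..b, h x := by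
    simp [intervalIntegral.integral_comp_sub_left]
  have hmean : 2 * ∫ x in a..b, h x ≤ (b - a) * (h a + h b) :=
    calc 2 * ∫ x in a..b, h x = ∫ x in a..b, (h x + h (a + b - x)) := by
          rw [intervalIntegral.integral_add hint hint_reflect, hreflect, two_mul]
      _ ≤ ∫ _ in a..b, (h a + h b) :=
          intervalIntegral.integral_mono_on hab.le (hint.add hint_reflect)
            intervalIntegrable_const fun x hx ↦ map_add_map_reflect_le_of_convexOn hconv
              (left_mem_Icc.2 hab.le) (right_mem_Icc.2 hab.le) (Icc_subset_segment hx)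
      _ = (b - a) * (h a + h b) := by rw [intervalIntegral.integral_const, smul_eq_mul]
  rw [trapezoidError, smul_eq_mul, smul_eq_mul, sub_nonneg, one_div_mul_eq_div,
    div_le_iff₀ (sub_pos.2 hab)]
  linarith

theorem norm_trapezoidError_le_of_norm_deriv2_le [CompleteSpace E] (hab : a < b)
    {f f' f'' : ℝ → E} {g g' g'' : ℝ → ℝ}
    (hf : ContinuousOn f (Icc a b)) (hf' : ∀ x ∈ Ioo a b, HasDerivAt f (f' x) x)
    (hf'' : ∀ x ∈ Ioo a b, HasDerivAt f' (f'' x) x)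
    (hg : ContinuousOn g (Icc a b)) (hg' : ∀ x ∈ Ioo a b, HasDerivAt g (g' x) x)
    (hg'' : ∀ x ∈ Ioo a b, HasDerivAt g' (g'' x) x)
    (hle : ∀ x ∈ Ioo a b, ‖f'' x‖ ≤ g'' x) :
    ‖trapezoidError f a b‖ ≤ trapezoidError g a b := by
  obtain ⟨φ, hφ_norm, hφ⟩ := exists_dual_vector'' ℝ (trapezoidError f a b)
  have hφ_le (v : E) : φ v ≤ ‖v‖ :=
    (le_abs_self _).trans (φ.le_of_opNorm_le_of_le hφ_norm le_rfl |>.trans_eq (one_mul _))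
  have hφf : ContinuousOn (φ ∘ f) (Icc a b) := φ.continuous.comp_continuousOn hf
  have hconv : ConvexOn ℝ (Icc a b) (g - φ ∘ f) := by
    refine convexOn_of_hasDerivWithinAt2_nonneg (f' := fun x ↦ g' x - φ (f' x))
      (f'' := fun x ↦ g'' x - φ (f'' x)) (convex_Icc a b) (hg.sub hφf) ?_ ?_ ?_ <;>
      rw [interior_Icc] <;> intro x hx
    · exact ((hg' x hx).sub (φ.hasFDerivAt.comp_hasDerivAt x (hf' x hx))).hasDerivWithinAt
    · exact ((hg'' x hx).sub (φ.hasFDerivAt.comp_hasDerivAt x (hf'' x hx))).hasDerivWithinAt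
    · exact sub_nonneg.2 ((hφ_le _).trans (hle x hx))
  have hnonneg := trapezoidError_nonneg_of_convexOn hab
    ((hg.sub hφf).intervalIntegrable_of_Icc hab.le) hconv
  rw [trapezoidError_sub (hg.intervalIntegrable_of_Icc hab.le)
    (hφf.intervalIntegrable_of_Icc hab.le),
    trapezoidError_continuousLinearMap_comp φ (hf.intervalIntegrable_of_Icc hab.le), hφ] at hnonneg
  exact sub_nonneg.1 hnonneg

end TrapezoidError

section ChordCubic

variable {a b : ℝ} (A B : ℝ)

/-- A cubic whose second derivative is the affine function with value `A` at `a` and `B` at `b`;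
it serves as the comparison function for functions whose second derivative lies below a chord. -/
noncomputable def chordCubic (a b A B x : ℝ) : ℝ :=
  (A * (b - x) ^ 3 + B * (x - a) ^ 3) / (6 * (b - a))

theorem continuous_chordCubic : Continuous (chordCubic a b A B) := by
  unfold chordCubic
  fun_prop

theorem hasDerivAt_chordCubic (x : ℝ) :
    HasDerivAt (chordCubic a b A B)
      ((B * (x - a) ^ 2 - A * (b - x) ^ 2) / (2 * (b - a))) x := by
  have hcubic := (((((hasDerivAt_id' x).const_sub b).pow 3).const_mul A).add
    ((((hasDerivAt_id' x).sub_const a).pow 3).const_mul B)).div_const (6 * (b - a))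
  refine hcubic.congr_deriv ?_
  norm_num
  field

theorem hasDerivAt_deriv_chordCubic (x : ℝ) :
    HasDerivAt (deriv (chordCubic a b A B))
      (((b - x) * A + (x - a) * B) / (b - a)) x := by
  rw [funext fun y ↦ (hasDerivAt_chordCubic (a := a) (b := b) A B y).deriv]
  have hquadratic := (((((hasDerivAt_id' x).sub_const a).pow 2).const_mul B).sub
    ((((hasDerivAt_id' x).const_sub b).pow 2).const_mul A)).div_const (2 * (b - a))
  refine hquadratic.congr_deriv ?_
  norm_num
  field

theorem integral_chordCubic (hab : a < b) :
    ∫ x in a..b, chordCubic a b A B x = (b - a) ^ 3 / 24 * (A + B) := by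
  have hleft : ∫ x in a..b, (b - x) ^ 3 = (b - a) ^ 4 / 4 := by
    norm_num [intervalIntegral.integral_comp_sub_left (fun x ↦ x ^ 3)]
  have hright : ∫ x in a..b, (x - a) ^ 3 = (b - a) ^ 4 / 4 := by
    norm_num [intervalIntegral.integral_comp_sub_right (fun x ↦ x ^ 3)]
  have hba : b - a ≠ 0 := (sub_pos.2 hab).ne'
  simp only [chordCubic]
  rw [intervalIntegral.integral_div, intervalIntegral.integral_add
    (Continuous.intervalIntegrable (by fun_prop) a b)
    (Continuous.intervalIntegrable (by fun_prop) a b),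
    intervalIntegral.integral_const_mul, intervalIntegral.integral_const_mul, hleft, hright]
  field

theorem trapezoidError_chordCubic (hab : a < b) :
    trapezoidError (chordCubic a b A B) a b = (b - a) ^ 2 / 24 * (A + B) := by
  have hba : b - a ≠ 0 := (sub_pos.2 hab).ne'
  rw [trapezoidError, integral_chordCubic A B hab]
  simp only [chordCubic, smul_eq_mul, sub_self]
  field

end ChordCubic

theorem hasDerivAt_iteratedDerivWithin {𝕜 F : Type*}
    [NontriviallyNormedField 𝕜] [NormedAddCommGroup F] [NormedSpace 𝕜 F] {k : ℕ} {f : 𝕜 → F}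
    {s : Set 𝕜} {x : 𝕜} (hdiff : DifferentiableWithinAt 𝕜 (iteratedDerivWithin k f s) s x)
    (hs : s ∈ nhds x) :
    HasDerivAt (iteratedDerivWithin k f s) (iteratedDerivWithin (k + 1) f s x) x := by
  rw [iteratedDerivWithin_succ]
  exact hdiff.hasDerivWithinAt.hasDerivAt hs

theorem cor31_convex_general {E : Type*} [NormedAddCommGroup E] [NormedSpace ℝ E] [CompleteSpace E]
    {a b : ℝ} {s : Set ℝ} {f : ℝ → E} (hab : a < b) (ha : a ∈ s) (hb : b ∈ s)
    (hdiff : ∀ k < 2, DifferentiableOn ℝ (iteratedDerivWithin k f s) s)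
    (hconv : ConvexOn ℝ s (fun x ↦ ‖iteratedDerivWithin 2 f s x‖)) :
    ‖trapezoidError f a b‖ ≤
      (b - a) ^ 2 / 24 * (‖iteratedDerivWithin 2 f s a‖ + ‖iteratedDerivWithin 2 f s b‖) := by
  have hsub : Icc a b ⊆ s := hconv.1.ordConnected.out ha hb
  have hderiv (k : ℕ) (hk : k < 2) (x : ℝ) (hx : x ∈ Ioo a b) :
      HasDerivAt (iteratedDerivWithin k f s) (iteratedDerivWithin (k + 1) f s x) x :=
    hasDerivAt_iteratedDerivWithin (hdiff k hk x (hsub (Ioo_subset_Icc_self hx)))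
      (Filter.mem_of_superset (Icc_mem_nhds hx.1 hx.2) hsub)
  have hcont := (hdiff 0 two_pos).continuousOn.mono hsub
  have hderiv_zero := hderiv 0 two_pos
  rw [iteratedDerivWithin_zero] at hcont hderiv_zero
  have hchord (x : ℝ) (hx : x ∈ Ioo a b) : ‖iteratedDerivWithin 2 f s x‖ ≤
      ((b - x) * ‖iteratedDerivWithin 2 f s a‖ + (x - a) * ‖iteratedDerivWithin 2 f s b‖)
        / (b - a) :=
    (le_div_iff₀' (sub_pos.2 hab)).2 (hconv.secant_mono_aux1 ha hb hx.1 hx.2)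
  rw [← trapezoidError_chordCubic _ _ hab]
  exact norm_trapezoidError_le_of_norm_deriv2_le hab hcont hderiv_zero (hderiv 1 one_lt_two)
    (continuous_chordCubic _ _).continuousOn
    (fun x _ ↦ (hasDerivAt_chordCubic _ _ x).differentiableAt.hasDerivAt)
    (fun x _ ↦ hasDerivAt_deriv_chordCubic _ _ x) hchord

/-- Corollary of Theorem 3.1 with m = α = p = 1 and n = 2. -/
theorem cor31_convex (a b : ℝ) (f : ℝ → ℝ)
    (ha : 0 < a) (hab : a < b)
    (hdiff : ∀ k < 2, DifferentiableOn ℝ (iteratedDerivWithin k f (Set.Icc 0 b)) (Set.Icc 0 b))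
    (hint : IntegrableOn (fun x => |iteratedDerivWithin 2 f (Set.Icc 0 b) x|) (Set.Icc 0 b))
    (hconv : ConvexOn ℝ (Set.Icc (0:ℝ) b) (fun x => |iteratedDerivWithin 2 f (Set.Icc 0 b) x|)) :
    |(f a + f b) / 2 - (1 / (b - a)) * ∫ x in a..b, f x|
    ≤ ((b - a) ^ 2 / 24)
        * (|iteratedDerivWithin 2 f (Set.Icc 0 b) a| + |iteratedDerivWithin 2 f (Set.Icc 0 b) b|) := by
  simpa [trapezoidError, div_eq_inv_mul] using
    cor31_convex_general (s := Icc 0 b) hab ⟨ha.le, hab.le⟩ ⟨(ha.trans hab).le, le_rfl⟩ hdiff hconv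
end

section
/- Let b > a > 0. If f is twice differentiable on [0,b], |f''| is integrable on [0,b], and |f''|² is convex on [0,b], then |(f(a)+f(b))/2 − (1/(b−a))·∫_a^b f(x) dx| ≤ ((b−a)²/12)·[ (|f''(a)|² + |f''(b)|²)/2 ]^{1/2}. -/
open MeasureTheory Real Set

/-!
Integrating by parts twice, the trapezoid error `(f a + f b) / 2 - ⨍ x in a..b, f x` equals
`(2 (b - a))⁻¹ ∫ (x - a) (b - x) f'' x`. The kernel is nonnegative and symmetric about the midpoint
`m` of `[a, b]`, hence orthogonal to `x - m`. So if `‖f''‖` is bounded by a concave function `φ`,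
replacing `φ` by a supporting line at `m` bounds the error by `(b - a) ^ 2 / 12 * φ m`.
When `‖f''‖ ^ p` is convex, it lies below its chord `ℓ`, and one takes `φ = ℓ ^ (1 / p)`, which is
concave because `1 / p ≤ 1`.
-/

lemma hasDerivWithinAt_iteratedDerivWithin_succ {𝕜 F : Type*} [NontriviallyNormedField 𝕜]
    [NormedAddCommGroup F] [NormedSpace 𝕜 F] {n : ℕ} {f : 𝕜 → F} {s : Set 𝕜} {x : 𝕜}
    (hf : DifferentiableWithinAt 𝕜 (iteratedDerivWithin n f s) s x) :
    HasDerivWithinAt (iteratedDerivWithin n f s) (iteratedDerivWithin (n + 1) f s x) s x := by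
  rw [iteratedDerivWithin_succ]
  exact hf.hasDerivWithinAt

lemma exists_affineMap_apply_eq_apply_eq {k V P : Type*} [Field k] [AddCommGroup V] [Module k V]
    [AddTorsor V P] {a b : k} (hab : a ≠ b) (u v : P) : ∃ ℓ : k →ᵃ[k] P, ℓ a = u ∧ ℓ b = v := by
  refine ⟨(AffineMap.lineMap u v).comp
    ((b - a)⁻¹ • (AffineMap.id k k - AffineMap.const k k a)), by simp, ?_⟩
  simp [inv_mul_cancel₀ (sub_ne_zero.2 hab.symm)]

section Convexity

variable {a b : ℝ} {φ ψ : ℝ → ℝ}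

lemma le_affineMap_of_convexOn_Icc (hψ : ConvexOn ℝ (Icc a b) ψ) {ℓ : ℝ →ᵃ[ℝ] ℝ}
    (hℓa : ψ a ≤ ℓ a) (hℓb : ψ b ≤ ℓ b) {x : ℝ} (hx : x ∈ Icc a b) : ψ x ≤ ℓ x := by
  have hab : a ≤ b := hx.1.trans hx.2
  obtain ⟨s, t, hs, ht, hst, rfl⟩ := (Convex.mem_Icc hab).1 hx
  calc ψ (s * a + t * b) ≤ s * ψ a + t * ψ b :=
        hψ.2 (left_mem_Icc.2 hab) (right_mem_Icc.2 hab) hs ht hst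
    _ ≤ s * ℓ a + t * ℓ b := by gcongr
    _ = ℓ (s * a + t * b) := (Convex.combo_affine_apply hst).symm

lemma exists_le_add_mul_sub_of_concaveOn {s : Set ℝ} {c : ℝ} (hφ : ConcaveOn ℝ s φ)
    (hc : c ∈ interior s) : ∃ σ, ∀ x ∈ s, φ x ≤ φ c + σ * (x - c) := by
  have hneg : ConvexOn ℝ s (-φ) := hφ.neg
  refine ⟨-derivWithin (-φ) (Ioi c) c, fun x hx => ?_⟩
  rcases lt_trichotomy x c with hxc | rfl | hcx
  · have hslope : slope (-φ) x c ≤ derivWithin (-φ) (Ioi c) c :=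
      (hneg.slope_le_leftDeriv_of_mem_interior hx hc hxc).trans
        (hneg.leftDeriv_le_rightDeriv_of_mem_interior hc)
    rw [slope_def_field, div_le_iff₀ (sub_pos.2 hxc)] at hslope
    simp only [Pi.neg_apply] at hslope
    linarith
  · simp
  · have hslope : derivWithin (-φ) (Ioi c) c ≤ slope (-φ) c x :=
      hneg.rightDeriv_le_slope_of_mem_interior hc hx hcx
    rw [slope_def_field, le_div_iff₀ (sub_pos.2 hcx)] at hslope
    simp only [Pi.neg_apply] at hslope
    linarith

end Convexity

section Trapezoid

variable {E : Type*} [NormedAddCommGroup E] [NormedSpace ℝ E] {a b : ℝ} {f g h : ℝ → E}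

/-- The primitive, vanishing at `a`, of the Peano kernel integrand `(x - a) (b - x) f'' x` of the
trapezoid rule on `[a, b]`, where `g` stands for `f'`. It is written in the form given by two
integrations by parts, in which only the continuous function `f` is integrated. -/
noncomputable def trapezoidPrimitive (a b : ℝ) (f g : ℝ → E) (x : ℝ) : E :=
  ((x - a) * (b - x)) • g x - (a + b - 2 * x) • f x + (b - a) • f a - (2 : ℝ) • ∫ y in a..x, f y

lemma trapezoidPrimitive_left : trapezoidPrimitive a b f g a = 0 := by
  simp only [trapezoidPrimitive, intervalIntegral.integral_same]
  module

lemma trapezoidPrimitive_right (hab : a ≠ b) :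
    trapezoidPrimitive a b f g b =
      (2 * (b - a)) • (midpoint ℝ (f a) (f b) - ⨍ x in a..b, f x) := by
  rw [interval_average_eq, midpoint_eq_smul_add, smul_sub, smul_smul, smul_smul,
    mul_inv_cancel_right₀ (sub_ne_zero.2 hab.symm), trapezoidPrimitive, invOf_eq_inv]
  module

lemma hasDerivWithinAt_trapezoidPrimitive [CompleteSpace E] {x : ℝ} {h' : E}
    (hf : ContinuousOn f (Icc a b)) (hx : x ∈ Icc a b)
    (hfx : HasDerivWithinAt f (g x) (Icc a b) x) (hgx : HasDerivWithinAt g h' (Icc a b) x) :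
    HasDerivWithinAt (trapezoidPrimitive a b f g) (((x - a) * (b - x)) • h') (Icc a b) x := by
  have := Fact.mk hx
  have hint : HasDerivWithinAt (fun x => ∫ y in a..x, f y) (f x) (Icc a b) x :=
    intervalIntegral.integral_hasDerivWithinAt_right
      ((hf.mono (Icc_subset_Icc_right hx.2)).intervalIntegrable_of_Icc hx.1)
      (hf.stronglyMeasurableAtFilter_nhdsWithin measurableSet_Icc x) (hf x hx)
  have hid : HasDerivWithinAt (fun x : ℝ => x) 1 (Icc a b) x := hasDerivWithinAt_id x _
  have hkernel := (hid.sub_const a).mul (hid.const_sub b)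
  have hkernel' := (hid.const_mul 2).const_sub (a + b)
  refine ((((hkernel.smul hgx).sub (hkernel'.smul hfx)).add_const _).sub
    (hint.const_smul (2 : ℝ))).congr_deriv ?_
  simp only [Pi.mul_apply]
  module

/-- The slope `σ` enters through `-σ/4 * ((x - a) * (b - x)) ^ 2`, which vanishes at both ends. -/
lemma hasDerivAt_trapezoidMajorant (a b c σ x : ℝ) :
    HasDerivAt (fun x => c * ((b - a) * (x - a) ^ 2 / 2 - (x - a) ^ 3 / 3)
        - σ / 4 * ((x - a) * (b - x)) ^ 2)
      ((x - a) * (b - x) * (c + σ * (x - midpoint ℝ a b))) x := by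
  have ha : HasDerivAt (fun x => x - a) 1 x := (hasDerivAt_id' x).sub_const a
  have hb : HasDerivAt (fun x => b - x) (-1) x := (hasDerivAt_id' x).const_sub b
  refine (((((ha.pow 2).const_mul (b - a)).div_const 2).sub ((ha.pow 3).div_const 3)).const_mul c
    |>.sub (((ha.mul hb).pow 2).const_mul (σ / 4))).congr_deriv ?_
  simp only [midpoint_eq_smul_add, invOf_eq_inv, smul_eq_mul, Pi.mul_apply]
  push_cast
  ring

variable [CompleteSpace E]

lemma norm_trapezoid_error_le_of_norm_deriv2_le_affine {c σ : ℝ} (hab : a < b)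
    (hf : ∀ x ∈ Icc a b, HasDerivWithinAt f (g x) (Icc a b) x)
    (hg : ∀ x ∈ Icc a b, HasDerivWithinAt g (h x) (Icc a b) x)
    (hh : ∀ x ∈ Icc a b, ‖h x‖ ≤ c + σ * (x - midpoint ℝ a b)) :
    ‖midpoint ℝ (f a) (f b) - ⨍ x in a..b, f x‖ ≤ (b - a) ^ 2 / 12 * c := by
  have hfc : ContinuousOn f (Icc a b) := fun x hx => (hf x hx).continuousWithinAt
  have hG : ∀ x ∈ Icc a b, HasDerivWithinAt (trapezoidPrimitive a b f g)
      (((x - a) * (b - x)) • h x) (Icc a b) x :=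
    fun x hx => hasDerivWithinAt_trapezoidPrimitive hfc hx (hf x hx) (hg x hx)
  have hle : ∀ x ∈ Ico a b, ‖((x - a) * (b - x)) • h x‖ ≤
      (x - a) * (b - x) * (c + σ * (x - midpoint ℝ a b)) := fun x hx => by
    have hkernel : 0 ≤ (x - a) * (b - x) :=
      mul_nonneg (sub_nonneg.2 hx.1) (sub_nonneg.2 hx.2.le)
    rw [norm_smul_of_nonneg hkernel]
    exact mul_le_mul_of_nonneg_left (hh x (Ico_subset_Icc_self hx)) hkernel
  have hend := image_norm_le_of_norm_deriv_right_le_deriv_boundary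
    (fun x hx => (hG x hx).continuousWithinAt)
    (fun x hx => (hG x (Ico_subset_Icc_self hx)).mono_of_mem_nhdsWithin
      (Icc_mem_nhdsGE_of_mem hx))
    (by simp [trapezoidPrimitive_left]) (hasDerivAt_trapezoidMajorant a b c σ) hle
    (right_mem_Icc.2 hab.le)
  have hpos : 0 < 2 * (b - a) := by linarith
  rw [trapezoidPrimitive_right hab.ne, norm_smul_of_nonneg hpos.le] at hend
  refine le_of_mul_le_mul_left (hend.trans_eq ?_) hpos
  ring

lemma norm_trapezoid_error_le_of_norm_deriv2_le_concaveOn {φ : ℝ → ℝ} (hab : a < b)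
    (hf : ∀ x ∈ Icc a b, HasDerivWithinAt f (g x) (Icc a b) x)
    (hg : ∀ x ∈ Icc a b, HasDerivWithinAt g (h x) (Icc a b) x)
    (hφ : ConcaveOn ℝ (Icc a b) φ) (hh : ∀ x ∈ Icc a b, ‖h x‖ ≤ φ x) :
    ‖midpoint ℝ (f a) (f b) - ⨍ x in a..b, f x‖ ≤ (b - a) ^ 2 / 12 * φ (midpoint ℝ a b) := by
  have hmid : midpoint ℝ a b ∈ interior (Icc a b) := by
    rw [interior_Icc, midpoint_eq_smul_add, invOf_eq_inv, smul_eq_mul]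
    constructor <;> linarith
  obtain ⟨σ, hσ⟩ := exists_le_add_mul_sub_of_concaveOn hφ hmid
  exact norm_trapezoid_error_le_of_norm_deriv2_le_affine hab hf hg
    fun x hx => (hh x hx).trans (hσ x hx)

theorem cor31_sq_convex_general {p : ℝ} (hp : 1 ≤ p) (hab : a < b)
    (hf : ∀ x ∈ Icc a b, HasDerivWithinAt f (g x) (Icc a b) x)
    (hg : ∀ x ∈ Icc a b, HasDerivWithinAt g (h x) (Icc a b) x)
    (hconv : ConvexOn ℝ (Icc a b) fun x => ‖h x‖ ^ p) :
    ‖midpoint ℝ (f a) (f b) - ⨍ x in a..b, f x‖ ≤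
      (b - a) ^ 2 / 12 * ((‖h a‖ ^ p + ‖h b‖ ^ p) / 2) ^ (1 / p) := by
  have hp₀ : 0 < p := one_pos.trans_le hp
  obtain ⟨ℓ, hℓa, hℓb⟩ := exists_affineMap_apply_eq_apply_eq hab.ne (‖h a‖ ^ p) (‖h b‖ ^ p)
  have hchord : ∀ x ∈ Icc a b, ‖h x‖ ^ p ≤ ℓ x :=
    fun x hx => le_affineMap_of_convexOn_Icc hconv hℓa.ge hℓb.ge hx
  have hℓ₀ : ∀ x ∈ Icc a b, 0 ≤ ℓ x := fun x hx => by grw [← hchord x hx]; positivity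
  have hconc : ConcaveOn ℝ (Icc a b) fun x => ℓ x ^ (1 / p) :=
    ((concaveOn_rpow (one_div_nonneg.2 hp₀.le) ((div_le_one hp₀).2 hp)).comp_affineMap ℓ).subset
      hℓ₀ (convex_Icc a b)
  have hbound : ∀ x ∈ Icc a b, ‖h x‖ ≤ ℓ x ^ (1 / p) := fun x hx => by
    rw [one_div, Real.le_rpow_inv_iff_of_pos (norm_nonneg _) (hℓ₀ x hx) hp₀]
    exact hchord x hx
  have hmid : ℓ (midpoint ℝ a b) = (‖h a‖ ^ p + ‖h b‖ ^ p) / 2 := by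
    rw [ℓ.map_midpoint, hℓa, hℓb, midpoint_eq_smul_add, invOf_eq_inv, smul_eq_mul, inv_mul_eq_div]
  simpa only [hmid] using
    norm_trapezoid_error_le_of_norm_deriv2_le_concaveOn hab hf hg hconc hbound

end Trapezoid

/-- Corollary of Theorem 3.1 with m = α = 1 and p = n = 2. -/
theorem cor31_sq_convex (a b : ℝ) (f : ℝ → ℝ)
    (ha : 0 < a) (hab : a < b)
    (hdiff : ∀ k < 2, DifferentiableOn ℝ (iteratedDerivWithin k f (Set.Icc 0 b)) (Set.Icc 0 b))
    (hint : IntegrableOn (fun x => |iteratedDerivWithin 2 f (Set.Icc 0 b) x|) (Set.Icc 0 b))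
    (hconv : ConvexOn ℝ (Set.Icc (0:ℝ) b)
      (fun x => |iteratedDerivWithin 2 f (Set.Icc 0 b) x| ^ 2)) :
    |(f a + f b) / 2 - (1 / (b - a)) * ∫ x in a..b, f x|
    ≤ ((b - a) ^ 2 / 12)
        * ((|iteratedDerivWithin 2 f (Set.Icc 0 b) a| ^ 2
            + |iteratedDerivWithin 2 f (Set.Icc 0 b) b| ^ 2) / 2) ^ ((1:ℝ) / 2) := by
  have hsub : Icc a b ⊆ Icc 0 b := Icc_subset_Icc_left ha.le
  have hderiv : ∀ k < 2, ∀ x ∈ Icc a b, HasDerivWithinAt (iteratedDerivWithin k f (Icc 0 b))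
      (iteratedDerivWithin (k + 1) f (Icc 0 b) x) (Icc a b) x := fun k hk x hx =>
    (hasDerivWithinAt_iteratedDerivWithin_succ (hdiff k hk x (hsub hx))).mono hsub
  have hmain := cor31_sq_convex_general one_le_two hab (hderiv 0 two_pos) (hderiv 1 one_lt_two)
    (by simpa only [rpow_two, norm_eq_abs] using hconv.subset hsub (convex_Icc a b))
  simpa only [iteratedDerivWithin_zero, midpoint_eq_smul_add, invOf_eq_inv, interval_average_eq,
    smul_eq_mul, inv_mul_eq_div, one_div_mul_eq_div, norm_eq_abs, rpow_two] using hmain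
end

section
/- Let b > a > 0 and let p, q > 1 satisfy 1/p + 1/q = 1. If f is twice differentiable on [0,b], |f''| is integrable on [0,b], and |f''|^q is convex on [0,b], then |(f(a)+f(b))/2 − (1/(b−a))·∫_a^b f(x) dx| ≤ ((b−a)²/(2(p+1)^{1/p}(q+2)^{1/q}))·[ ((q+1)|f''(a)|^q + |f''(b)|^q)/(q+1) ]^{1/q}. -/
open MeasureTheory Real Set

/-!
Two integrations by parts, followed by the substitution `x = t a + (1 - t) b`, turn the trapezoid
error into `½ (b - a)² ∫ (1 - t) t f''(t a + (1 - t) b) dt` over `[0, 1]`. By convexity `‖f''‖` is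
at most the `q`-th root of the chord `t ‖f''(a)‖ ^ q + (1 - t) ‖f''(b)‖ ^ q`. Hölder's inequality
with the factors split as `1 - t` and `t · chord ^ (1 / q)` leaves two elementary moments, which
give exactly the stated constant.
-/

lemma intervalIntegral_mul_le_Lp_mul_Lq_of_continuousOn {a b p q : ℝ} {f g : ℝ → ℝ} (hab : a ≤ b)
    (hpq : p.HolderConjugate q)
    (hf : ContinuousOn f (Icc a b)) (hg : ContinuousOn g (Icc a b))
    (hf_nonneg : ∀ t ∈ Ioc a b, 0 ≤ f t) (hg_nonneg : ∀ t ∈ Ioc a b, 0 ≤ g t) :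
    ∫ t in a..b, f t * g t
      ≤ (∫ t in a..b, f t ^ p) ^ (1 / p) * (∫ t in a..b, g t ^ q) ^ (1 / q) := by
  have memLp {φ : ℝ → ℝ} (hφ : ContinuousOn φ (Icc a b)) (r : ENNReal) :
      MemLp φ r (volume.restrict (Ioc a b)) := by
    obtain ⟨C, hC⟩ := isCompact_Icc.exists_bound_of_continuousOn hφ
    exact .of_bound ((hφ.mono Ioc_subset_Icc_self).aestronglyMeasurable measurableSet_Ioc) C <|
      ae_restrict_of_forall_mem measurableSet_Ioc fun t ht => hC t (Ioc_subset_Icc_self ht)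
  simp only [intervalIntegral.integral_of_le hab]
  exact integral_mul_le_Lp_mul_Lq_of_nonneg hpq
    (ae_restrict_of_forall_mem measurableSet_Ioc hf_nonneg)
    (ae_restrict_of_forall_mem measurableSet_Ioc hg_nonneg) (memLp hf _) (memLp hg _)

lemma integral_one_sub_rpow {p : ℝ} (hp : -1 < p) :
    ∫ t in (0 : ℝ)..1, (1 - t) ^ p = 1 / (p + 1) := by
  rw [intervalIntegral.integral_comp_sub_left (fun t : ℝ => t ^ p) 1, integral_rpow (Or.inl hp)]
  simp [Real.zero_rpow (by linarith : p + 1 ≠ 0)]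

lemma integral_rpow_mul_chord {q : ℝ} (hq : -1 < q) (A B : ℝ) :
    ∫ t in (0 : ℝ)..1, t ^ q * (t * A + (1 - t) * B)
      = ((q + 1) * A + B) / ((q + 1) * (q + 2)) := by
  have hq₁ : q + 1 ≠ 0 := by linarith
  have hq₂ : q + 1 + 1 ≠ 0 := by linarith
  have expand : ∀ t ∈ uIcc (0 : ℝ) 1, t ^ q * (t * A + (1 - t) * B)
      = t ^ (q + 1) * (A - B) + t ^ q * B := by
    intro t ht
    rw [uIcc_of_le zero_le_one] at ht
    rw [Real.rpow_add_one' ht.1 hq₁]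
    ring
  rw [intervalIntegral.integral_congr expand,
    intervalIntegral.integral_add
      ((intervalIntegral.intervalIntegrable_rpow' (by linarith)).mul_const _)
      ((intervalIntegral.intervalIntegrable_rpow' hq).mul_const _),
    intervalIntegral.integral_mul_const, intervalIntegral.integral_mul_const,
    integral_rpow (Or.inl (by linarith)), integral_rpow (Or.inl hq),
    Real.one_rpow, Real.one_rpow, Real.zero_rpow hq₁, Real.zero_rpow hq₂]
  rw [show q + 2 = q + 1 + 1 by ring]
  field_simp
  ring

lemma integral_one_sub_mul_chord_rpow_le {p q A B : ℝ} (hpq : p.HolderConjugate q)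
    (hA : 0 ≤ A) (hB : 0 ≤ B) :
    ∫ t in (0 : ℝ)..1, (1 - t) * (t * (t * A + (1 - t) * B) ^ (1 / q))
      ≤ 1 / ((p + 1) ^ (1 / p) * (q + 2) ^ (1 / q)) * (((q + 1) * A + B) / (q + 1)) ^ (1 / q) := by
  have hp := hpq.pos
  have hq := hpq.symm.pos
  have chord_nonneg {t : ℝ} (ht : t ∈ Ioc 0 1) : 0 ≤ t * A + (1 - t) * B :=
    add_nonneg (mul_nonneg ht.1.le hA) (mul_nonneg (sub_nonneg.2 ht.2) hB)
  have pow_chord_root : ∫ t in (0 : ℝ)..1, (t * (t * A + (1 - t) * B) ^ (1 / q)) ^ q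
      = ∫ t in (0 : ℝ)..1, t ^ q * (t * A + (1 - t) * B) := by
    simp only [intervalIntegral.integral_of_le zero_le_one]
    refine setIntegral_congr_fun measurableSet_Ioc fun t ht => ?_
    simp only [one_div]
    rw [Real.mul_rpow ht.1.le (Real.rpow_nonneg (chord_nonneg ht) _),
      Real.rpow_inv_rpow (chord_nonneg ht) hq.ne']
  calc ∫ t in (0 : ℝ)..1, (1 - t) * (t * (t * A + (1 - t) * B) ^ (1 / q))
      ≤ (∫ t in (0 : ℝ)..1, (1 - t) ^ p) ^ (1 / p)
          * (∫ t in (0 : ℝ)..1, (t * (t * A + (1 - t) * B) ^ (1 / q)) ^ q) ^ (1 / q) :=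
        intervalIntegral_mul_le_Lp_mul_Lq_of_continuousOn zero_le_one hpq (by fun_prop)
          (continuousOn_id.mul (.rpow_const (by fun_prop) fun _ _ => .inr (by positivity)))
          (fun t ht => sub_nonneg.2 ht.2)
          fun t ht => mul_nonneg ht.1.le (Real.rpow_nonneg (chord_nonneg ht) _)
    _ = (1 / (p + 1)) ^ (1 / p) * (((q + 1) * A + B) / (q + 1) / (q + 2)) ^ (1 / q) := by
        rw [pow_chord_root, integral_one_sub_rpow (by linarith),
          integral_rpow_mul_chord (by linarith), div_div]
    _ = _ := by
        rw [Real.div_rpow (by positivity) (by positivity : 0 ≤ q + 2),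
          Real.div_rpow zero_le_one (by positivity), Real.one_rpow]
        ring

lemma norm_le_chord_rpow_of_convexOn {V W : Type*} [AddCommGroup V] [Module ℝ V]
    [SeminormedAddCommGroup W] {s : Set V} {g : V → W} {q : ℝ} (hq : 0 < q)
    (hconv : ConvexOn ℝ s fun x => ‖g x‖ ^ q) {x y : V} (hx : x ∈ s) (hy : y ∈ s)
    {t : ℝ} (ht : t ∈ Icc 0 1) :
    ‖g (t • x + (1 - t) • y)‖ ≤ (t * ‖g x‖ ^ q + (1 - t) * ‖g y‖ ^ q) ^ (1 / q) := by
  have ht₁ : 0 ≤ 1 - t := sub_nonneg.2 ht.2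
  have ht₀ : 0 ≤ t := ht.1
  rw [one_div, Real.le_rpow_inv_iff_of_pos (norm_nonneg _) (by positivity) hq]
  exact hconv.2 hx hy ht₀ ht₁ (by ring)

lemma hasDerivWithinAt_iteratedDerivWithin {𝕜 F : Type*} [NontriviallyNormedField 𝕜]
    [NormedAddCommGroup F] [NormedSpace 𝕜 F] {f : 𝕜 → F} {s t : Set 𝕜} {k : ℕ}
    (hf : DifferentiableOn 𝕜 (iteratedDerivWithin k f s) s) (hts : t ⊆ s) :
    ∀ x ∈ t, HasDerivWithinAt (iteratedDerivWithin k f s) (iteratedDerivWithin (k + 1) f s x) t x :=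
  fun x hx => by
    rw [iteratedDerivWithin_succ]
    exact (hf x (hts hx)).hasDerivWithinAt.mono hts

section TrapezoidError

variable {E : Type*} [NormedAddCommGroup E] [NormedSpace ℝ E] {a b : ℝ} {f f' f'' : ℝ → E}

lemma integral_sub_mul_sub_smul_eq_pow_smul_integral_zero_one (g : ℝ → E) :
    ∫ x in a..b, ((x - a) * (b - x)) • g x
      = (b - a) ^ 3 • ∫ t in (0 : ℝ)..1, ((1 - t) * t) • g (t * a + (1 - t) * b) := by
  have integrand (t : ℝ) :
      ((b - (b - a) * t - a) * ((b - a) * t)) • g (b - (b - a) * t)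
        = (b - a) ^ 2 • ((1 - t) * t) • g (t * a + (1 - t) * b) := by
    rw [smul_smul, show b - (b - a) * t = t * a + (1 - t) * b by ring]
    congr 1
    ring
  have rescale := intervalIntegral.smul_integral_comp_sub_mul (a := 0) (b := 1)
    (fun x => ((x - a) * (b - x)) • g x) (b - a) b
  simp only [integrand, intervalIntegral.integral_smul, mul_one, mul_zero, sub_zero,
    sub_sub_cancel] at rescale
  rw [← rescale, smul_smul, ← pow_succ']

lemma norm_integral_one_sub_mul_smul_le_of_convexOn {p q : ℝ} (hab : a ≤ b)
    (hpq : p.HolderConjugate q) {g : ℝ → E} (hconv : ConvexOn ℝ (Icc a b) fun x => ‖g x‖ ^ q) :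
    ‖∫ t in (0 : ℝ)..1, ((1 - t) * t) • g (t * a + (1 - t) * b)‖
      ≤ 1 / ((p + 1) ^ (1 / p) * (q + 2) ^ (1 / q))
        * (((q + 1) * ‖g a‖ ^ q + ‖g b‖ ^ q) / (q + 1)) ^ (1 / q) := by
  have hq := hpq.symm.pos
  have hroot : Continuous fun t : ℝ => (t * ‖g a‖ ^ q + (1 - t) * ‖g b‖ ^ q) ^ (1 / q) :=
    .rpow_const (by fun_prop) fun _ => .inr (by positivity)
  refine (intervalIntegral.norm_integral_le_of_norm_le zero_le_one (.of_forall fun t ht => ?_)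
    (Continuous.intervalIntegrable (by fun_prop) _ _)).trans
      (integral_one_sub_mul_chord_rpow_le hpq (by positivity) (by positivity))
  have ht₀ : 0 ≤ t := ht.1.le
  have ht₁ : 0 ≤ 1 - t := sub_nonneg.2 ht.2
  rw [norm_smul, Real.norm_of_nonneg (mul_nonneg ht₁ ht₀), mul_assoc]
  gcongr
  exact norm_le_chord_rpow_of_convexOn hq hconv (left_mem_Icc.2 hab) (right_mem_Icc.2 hab)
    (Ioc_subset_Icc_self ht)

variable [CompleteSpace E]

lemma intervalIntegrable_of_hasDerivAt_of_convexOn_norm_rpow {q : ℝ} (hab : a ≤ b) (hq : 0 < q)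
    (hderiv : ∀ x ∈ Ioo a b, HasDerivAt f (f' x) x)
    (hconv : ConvexOn ℝ (Icc a b) fun x => ‖f' x‖ ^ q) :
    IntervalIntegrable f' volume a b := by
  have hmeas : AEStronglyMeasurable f' (volume.restrict (Ioo a b)) :=
    (aestronglyMeasurable_deriv f _).congr <|
      ae_restrict_of_forall_mem measurableSet_Ioo fun x hx => (hderiv x hx).deriv
  rw [intervalIntegrable_iff_integrableOn_Ioo_of_le hab]
  refine Integrable.of_bound hmeas (max (‖f' a‖ ^ q) (‖f' b‖ ^ q) ^ q⁻¹)
    (ae_restrict_of_forall_mem measurableSet_Ioo fun x hx => ?_)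
  rw [Real.le_rpow_inv_iff_of_pos (norm_nonneg _) (by positivity) hq]
  exact hconv.le_max_of_mem_Icc (left_mem_Icc.2 hab) (right_mem_Icc.2 hab)
    (Ioo_subset_Icc_self hx)

lemma integral_sub_mul_sub_smul_eq_of_hasDerivAt (hab : a ≤ b)
    (hf : ContinuousOn f (Icc a b)) (hf' : ContinuousOn f' (Icc a b))
    (hff' : ∀ x ∈ Ioo a b, HasDerivAt f (f' x) x)
    (hf'f'' : ∀ x ∈ Ioo a b, HasDerivAt f' (f'' x) x)
    (hint : IntervalIntegrable f'' volume a b) :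
    ∫ x in a..b, ((x - a) * (b - x)) • f'' x
      = (b - a) • (f a + f b) - (2 : ℝ) • ∫ x in a..b, f x := by
  have hfint : IntervalIntegrable (fun x => (2 : ℝ) • f x) volume a b :=
    (ContinuousOn.intervalIntegrable_of_Icc hab hf).smul 2
  have hwint : IntervalIntegrable (fun x => ((x - a) * (b - x)) • f'' x) volume a b :=
    hint.continuousOn_smul (by fun_prop)
  have antideriv : ∀ x ∈ Ioo a b,
      HasDerivAt (fun x => ((x - a) * (b - x)) • f' x - (a + b - 2 * x) • f x)
        (((x - a) * (b - x)) • f'' x + (2 : ℝ) • f x) x := by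
    intro x hx
    have hquad : HasDerivAt (fun x => (x - a) * (b - x)) (1 * (b - x) + (x - a) * (-1)) x :=
      ((hasDerivAt_id x).sub_const a).mul ((hasDerivAt_id x).const_sub b)
    have hlin : HasDerivAt (fun x => a + b - 2 * x) (-(2 * 1)) x :=
      ((hasDerivAt_id x).const_mul 2).const_sub (a + b)
    exact ((hquad.smul (hf'f'' x hx)).sub (hlin.smul (hff' x hx))).congr_deriv (by module)
  have ftc := intervalIntegral.integral_eq_sub_of_hasDerivAt_of_le hab (by fun_prop) antideriv
    (hwint.add hfint)
  rw [intervalIntegral.integral_add hwint hfint, intervalIntegral.integral_smul] at ftc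
  rw [eq_sub_of_add_eq ftc]
  module

lemma trapezoid_error_eq (hab : a < b)
    (hf : ContinuousOn f (Icc a b)) (hf' : ContinuousOn f' (Icc a b))
    (hff' : ∀ x ∈ Ioo a b, HasDerivAt f (f' x) x)
    (hf'f'' : ∀ x ∈ Ioo a b, HasDerivAt f' (f'' x) x)
    (hint : IntervalIntegrable f'' volume a b) :
    (1 / 2 : ℝ) • (f a + f b) - (1 / (b - a)) • ∫ x in a..b, f x
      = ((b - a) ^ 2 / 2) • ∫ t in (0 : ℝ)..1, ((1 - t) * t) • f'' (t * a + (1 - t) * b) := by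
  have hba : b - a ≠ 0 := sub_ne_zero.2 hab.ne'
  have parts := integral_sub_mul_sub_smul_eq_of_hasDerivAt hab.le hf hf' hff' hf'f'' hint
  rw [integral_sub_mul_sub_smul_eq_pow_smul_integral_zero_one] at parts
  calc (1 / 2 : ℝ) • (f a + f b) - (1 / (b - a)) • ∫ x in a..b, f x
      = (1 / (2 * (b - a))) • ((b - a) • (f a + f b) - (2 : ℝ) • ∫ x in a..b, f x) := by
        match_scalars <;> field_simp
    _ = _ := by
        rw [← parts, smul_smul]
        congr 1
        field_simp

theorem cor32_convex_general {p q : ℝ} (hab : a < b) (hpq : p.HolderConjugate q)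
    (hf : ∀ x ∈ Icc a b, HasDerivWithinAt f (f' x) (Icc a b) x)
    (hf' : ∀ x ∈ Icc a b, HasDerivWithinAt f' (f'' x) (Icc a b) x)
    (hconv : ConvexOn ℝ (Icc a b) fun x => ‖f'' x‖ ^ q) :
    ‖(1 / 2 : ℝ) • (f a + f b) - (1 / (b - a)) • ∫ x in a..b, f x‖
      ≤ ((b - a) ^ 2 / (2 * (p + 1) ^ (1 / p) * (q + 2) ^ (1 / q)))
        * (((q + 1) * ‖f'' a‖ ^ q + ‖f'' b‖ ^ q) / (q + 1)) ^ (1 / q) := by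
  have interior {φ φ' : ℝ → E} (hφ : ∀ x ∈ Icc a b, HasDerivWithinAt φ (φ' x) (Icc a b) x) :
      ∀ x ∈ Ioo a b, HasDerivAt φ (φ' x) x := fun x hx =>
    (hφ x (Ioo_subset_Icc_self hx)).hasDerivAt (Icc_mem_nhds hx.1 hx.2)
  have hint : IntervalIntegrable f'' volume a b :=
    intervalIntegrable_of_hasDerivAt_of_convexOn_norm_rpow hab.le hpq.symm.pos (interior hf') hconv
  rw [trapezoid_error_eq hab (HasDerivWithinAt.continuousOn hf) (HasDerivWithinAt.continuousOn hf')
    (interior hf) (interior hf') hint, norm_smul, Real.norm_of_nonneg (by positivity)]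
  calc (b - a) ^ 2 / 2 * ‖∫ t in (0 : ℝ)..1, ((1 - t) * t) • f'' (t * a + (1 - t) * b)‖
      ≤ (b - a) ^ 2 / 2 * (1 / ((p + 1) ^ (1 / p) * (q + 2) ^ (1 / q))
          * (((q + 1) * ‖f'' a‖ ^ q + ‖f'' b‖ ^ q) / (q + 1)) ^ (1 / q)) := by
        gcongr
        exact norm_integral_one_sub_mul_smul_le_of_convexOn hab.le hpq hconv
    _ = _ := by ring

end TrapezoidError

/-- Corollary of Theorem 3.2 with m = α = 1 and n = 2. -/
theorem cor32_convex (a b p q : ℝ) (f : ℝ → ℝ)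
    (ha : 0 < a) (hab : a < b)
    (hp : 1 < p) (hq : 1 < q) (hpq : 1 / p + 1 / q = 1)
    (hdiff : ∀ k < 2, DifferentiableOn ℝ (iteratedDerivWithin k f (Set.Icc 0 b)) (Set.Icc 0 b))
    (hint : IntegrableOn (fun x => |iteratedDerivWithin 2 f (Set.Icc 0 b) x|) (Set.Icc 0 b))
    (hconv : ConvexOn ℝ (Set.Icc (0:ℝ) b)
      (fun x => |iteratedDerivWithin 2 f (Set.Icc 0 b) x| ^ q)) :
    |(f a + f b) / 2 - (1 / (b - a)) * ∫ x in a..b, f x|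
    ≤ ((b - a) ^ 2 / (2 * (p + 1) ^ (1 / p) * (q + 2) ^ (1 / q)))
        * ( ((q + 1) * |iteratedDerivWithin 2 f (Set.Icc 0 b) a| ^ q
              + |iteratedDerivWithin 2 f (Set.Icc 0 b) b| ^ q) / (q + 1) ) ^ (1 / q) := by
  have hsub : Icc a b ⊆ Icc 0 b := Icc_subset_Icc_left ha.le
  simpa only [iteratedDerivWithin_zero, Real.norm_eq_abs, smul_eq_mul, one_div_mul_eq_div] using
    cor32_convex_general hab (Real.holderConjugate_iff.2 ⟨hp, by simpa using hpq⟩)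
      (hasDerivWithinAt_iteratedDerivWithin (hdiff 0 two_pos) hsub)
      (hasDerivWithinAt_iteratedDerivWithin (hdiff 1 one_lt_two) hsub)
      (hconv.subset hsub (convex_Icc a b))
end

section
/- Let b > a > 0 and let p, q > 1 satisfy 1/p + 1/q = 1. Then |1/H(a,b) − 1/L(a,b)| ≤ ((b−a)² / ((p+1)^{1/p}(q+2)^{1/q}))·[ 1/a^{3q} + 1/((q+1)·b^{3q}) ]^{1/q}. -/
open Real

/-!
`1/H(a,b) - 1/L(a,b)` is the error of the one-step trapezoidal rule for the average of `x⁻¹` over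
`[a, b]`. Since `(x⁻¹)'' = 2 x⁻³ ≤ 2 a⁻³` there, it is at most `(b - a)² / (6 a³)`. By Bernoulli's
inequality `(p + 1)^(1/p) ≤ 2` and `(q + 2)^(1/q) ≤ 3`, which accounts for the `6`, and the first
summand of the bracket alone contributes `a⁻³`.
-/

lemma abs_iteratedDerivWithin_two_inv_le {m : ℝ} (hm : 0 < m) {s : Set ℝ} (hs : UniqueDiffOn ℝ s)
    (hs_closed : IsClosed s) (hsm : s ⊆ Set.Ici m) (x : ℝ) :
    |iteratedDerivWithin 2 (fun t : ℝ ↦ t⁻¹) s x| ≤ 2 / m ^ 3 := by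
  by_cases hx : x ∈ s
  · have hmx : m ≤ x := hsm hx
    have hx_pos : 0 < x := hm.trans_le hmx
    have second_deriv : iteratedDerivWithin 2 (fun t : ℝ ↦ t⁻¹) s x = 2 / x ^ 3 := by
      rw [iteratedDerivWithin_eq_iteratedDeriv hs (contDiffAt_inv ℝ hx_pos.ne') hx,
        iteratedDeriv_eq_iterate, iter_deriv_inv]
      norm_num [zpow_neg, div_eq_mul_inv]
    rw [second_deriv, abs_of_pos (by positivity)]
    gcongr
  · -- off `s` the derivative takes the junk value `0`, and the trapezoidal bound asks for all `x`
    rw [iteratedDerivWithin_succ,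
      derivWithin_zero_of_notMem_closure (by rwa [hs_closed.closure_eq]), abs_zero]
    positivity

section TrapezoidalRule

variable {m a b : ℝ}

lemma abs_trapezoidal_error_inv_le (hm : 0 < m) (ha : m ≤ a) (hb : m ≤ b) {N : ℕ} (hN : 0 < N) :
    |trapezoidal_error (fun t ↦ t⁻¹) N a b| ≤ |b - a| ^ 3 / (6 * m ^ 3 * N ^ 2) := by
  rcases eq_or_ne a b with rfl | hab
  · simp
  have hsub : Set.uIcc a b ⊆ Set.Ici m := fun x hx ↦ (le_min ha hb).trans hx.1
  have hsmooth : ContDiffOn ℝ 2 (fun t : ℝ ↦ t⁻¹) (Set.uIcc a b) :=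
    (contDiffOn_inv ℝ).mono fun x hx ↦ (hm.trans_le (hsub hx)).ne'
  calc |trapezoidal_error (fun t ↦ t⁻¹) N a b|
      ≤ |b - a| ^ 3 * (2 / m ^ 3) / (12 * N ^ 2) :=
        trapezoidal_error_le_of_c2 hsmooth
          (abs_iteratedDerivWithin_two_inv_le hm (uniqueDiffOn_uIcc hab) isClosed_Icc hsub) hN
    _ = |b - a| ^ 3 / (6 * m ^ 3 * N ^ 2) := by field_simp; norm_num

lemma trapezoidal_error_one_inv (ha : 0 < a) (hb : 0 < b) :
    trapezoidal_error (fun t ↦ t⁻¹) 1 a b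
      = (b - a) * ((1 / a + 1 / b) / 2) - (log b - log a) := by
  rw [trapezoidal_error, trapezoidal_integral_one, integral_inv_of_pos ha hb,
    log_div hb.ne' ha.ne']
  ring

lemma abs_inv_harmonicMean_sub_inv_logMean_le (hm : 0 < m) (ha : m ≤ a) (hb : m ≤ b)
    (hab : a ≠ b) :
    |(1 / a + 1 / b) / 2 - (log b - log a) / (b - a)| ≤ (b - a) ^ 2 / (6 * m ^ 3) := by
  have hsub : b - a ≠ 0 := sub_ne_zero.2 hab.symm
  have hsub_abs : 0 < |b - a| := abs_pos.2 hsub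
  have error_eq : (1 / a + 1 / b) / 2 - (log b - log a) / (b - a)
      = trapezoidal_error (fun t ↦ t⁻¹) 1 a b / (b - a) := by
    rw [trapezoidal_error_one_inv (hm.trans_le ha) (hm.trans_le hb),
      sub_div ((b - a) * _), mul_div_cancel_left₀ _ hsub]
  rw [error_eq, abs_div, div_le_iff₀ hsub_abs]
  calc |trapezoidal_error (fun t ↦ t⁻¹) 1 a b|
      ≤ |b - a| ^ 3 / (6 * m ^ 3 * (1 : ℕ) ^ 2) := abs_trapezoidal_error_inv_le hm ha hb one_pos
    _ = (b - a) ^ 2 / (6 * m ^ 3) * |b - a| := by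
        rw [← sq_abs (b - a), Nat.cast_one]
        ring

end TrapezoidalRule

lemma one_add_mul_rpow_one_div_le {p s : ℝ} (hp : 1 ≤ p) (hs : 0 ≤ 1 + p * s) :
    (1 + p * s) ^ (1 / p) ≤ 1 + s := by
  have hs' : -1 ≤ s := by nlinarith
  rw [one_div, rpow_inv_le_iff_of_pos hs (by linarith) (by linarith)]
  exact one_add_mul_self_le_rpow_one_add hs' hp

lemma add_one_rpow_mul_add_two_rpow_le_six {p q : ℝ} (hp : 1 ≤ p) (hq : 1 ≤ q) :
    (p + 1) ^ (1 / p) * (q + 2) ^ (1 / q) ≤ 6 := by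
  have hp_le : (p + 1) ^ (1 / p) ≤ 2 := by
    have h := one_add_mul_rpow_one_div_le (s := 1) hp (by linarith)
    rwa [mul_one, add_comm, one_add_one_eq_two] at h
  have hq_le : (q + 2) ^ (1 / q) ≤ 3 :=
    calc (q + 2) ^ (1 / q) ≤ (1 + q * 2) ^ (1 / q) :=
        rpow_le_rpow (by linarith) (by linarith) (by positivity)
      _ ≤ 1 + 2 := one_add_mul_rpow_one_div_le hq (by linarith)
      _ = 3 := by norm_num
  calc (p + 1) ^ (1 / p) * (q + 2) ^ (1 / q) ≤ 2 * 3 := by gcongr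
    _ = 6 := by norm_num

lemma le_rpow_add_rpow_one_div {x c q : ℝ} (hx : 0 ≤ x) (hc : 0 ≤ c) (hq : 0 < q) :
    x ≤ (x ^ q + c) ^ (1 / q) := by
  rw [one_div, le_rpow_inv_iff_of_pos hx (by positivity) hq]
  exact le_add_of_nonneg_right hc

theorem mean_ineq_four_general {a b p q : ℝ} (ha : 0 < a) (hab : a < b) (hp : 1 ≤ p)
    (hq : 1 ≤ q) :
    |(1 / a + 1 / b) / 2 - (log b - log a) / (b - a)|
      ≤ ((b - a) ^ 2 / ((p + 1) ^ (1 / p) * (q + 2) ^ (1 / q)))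
        * (1 / a ^ (3 * q) + 1 / ((q + 1) * b ^ (3 * q))) ^ (1 / q) := by
  have hb : 0 < b := ha.trans hab
  have a_pow : 1 / a ^ (3 * q) = (1 / a ^ 3) ^ q := by
    rw [rpow_mul ha.le, div_rpow zero_le_one (by positivity), one_rpow, ← Nat.cast_ofNat (n := 3),
      rpow_natCast]
  have bracket : 1 / a ^ 3 ≤ (1 / a ^ (3 * q) + 1 / ((q + 1) * b ^ (3 * q))) ^ (1 / q) := by
    rw [a_pow]
    exact le_rpow_add_rpow_one_div (by positivity) (by positivity) (by positivity)
  calc |(1 / a + 1 / b) / 2 - (log b - log a) / (b - a)|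
      ≤ (b - a) ^ 2 / (6 * a ^ 3) :=
        abs_inv_harmonicMean_sub_inv_logMean_le ha le_rfl hab.le hab.ne
    _ = (b - a) ^ 2 / 6 * (1 / a ^ 3) := by ring
    _ ≤ _ := by
        gcongr
        exact add_one_rpow_mul_add_two_rpow_le_six hp hq

/-- mean inequality (Theorem 4.4), where `1/H(a,b) = (1/a + 1/b)/2` and
`1/L(a,b) = (log b - log a)/(b - a)`. -/
theorem mean_ineq_four (a b p q : ℝ)
    (ha : 0 < a) (hab : a < b)
    (hp : 1 < p) (hq : 1 < q) (hpq : 1 / p + 1 / q = 1) :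
    |(1 / a + 1 / b) / 2 - (Real.log b - Real.log a) / (b - a)|
    ≤ ((b - a) ^ 2 / ((p + 1) ^ (1 / p) * (q + 2) ^ (1 / q)))
        * (1 / a ^ (3 * q) + 1 / ((q + 1) * b ^ (3 * q))) ^ (1 / q) :=
  mean_ineq_four_general ha hab hp.le hq.le
end
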